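/- arXiv:1710.11609 — 3 statements merged into one kernel-verified Lean document; each statement's English description precedes it below -/
import Mathlib

section
/- Let L : ℂ[x] → ℂ[x] be the linear operator L(p) = p' + 5x⁴·p. Then ℂ[x] decomposes as the direct sum of the range of L and the linear span of {1, x, x², x³}; that is, every polynomial is congruent modulo the image of L to a unique linear combination of 1, x, x², x³, and the quotient ℂ[x]/L(ℂ[x]) is 4-dimensional. -/
open Polynomial

/-- The one-variable twisted differential `L(p) = p' + 5x⁴·p` associated to the
potential `x⁵`. -/
noncomputable def Ltw : Polynomial ℂ →ₗ[ℂ] Polynomial ℂ :=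
  Polynomial.derivative + LinearMap.mulLeft ℂ (5 * X ^ 4)

/-!
Multiplication by `q` raises degrees by exactly `deg q`, and adding `p'` to `q p` changes neither
its degree nor its leading coefficient. A linear operator that raises every degree by `d` has no
nonzero value of degree less than `d`. If it also multiplies leading coefficients by a unit, then
division with remainder by its values reduces any polynomial to one of degree less than `d`.
-/

open scoped nonZeroDivisors

section DegreeRaising

variable {R : Type*} [Ring R] {L : R[X] →ₗ[R] R[X]} {d : ℕ}

theorem disjoint_range_degreeLT_of_degree_map (hdeg : ∀ p, (L p).degree = d + p.degree) :
    Disjoint (LinearMap.range L) (degreeLT R d) := by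
  rw [Submodule.disjoint_def]
  rintro _ ⟨p, rfl⟩ hLp
  by_contra hne
  have hp : p ≠ 0 := by
    rintro rfl
    exact hne L.map_zero
  have hle : (d : WithBot ℕ) ≤ (L p).degree := by
    rw [hdeg]
    exact le_add_of_nonneg_right (zero_le_degree_iff.2 hp)
  exact (mem_degreeLT.1 hLp).not_ge hle

theorem exists_degree_sub_map_lt {u : R} (hu : IsUnit u)
    (hdeg : ∀ p, (L p).degree = d + p.degree)
    (hlead : ∀ p, (L p).leadingCoeff = u * p.leadingCoeff)
    {f : R[X]} (hf : f ≠ 0) (hfd : d ≤ f.natDegree) :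
    ∃ p, (f - L p).degree < f.degree := by
  obtain ⟨a, ha⟩ : u ∣ f.leadingCoeff := hu.dvd
  have ha0 : a ≠ 0 := by
    rintro rfl
    exact hf (leadingCoeff_eq_zero.1 (ha.trans (mul_zero u)))
  refine ⟨monomial (f.natDegree - d) a, degree_sub_lt_left ?_ hf ?_⟩
  · rw [hdeg, degree_monomial _ ha0, degree_eq_natDegree hf, ← Nat.cast_add,
      Nat.add_sub_cancel' hfd]
  · rw [hlead, leadingCoeff_monomial, ha]

theorem codisjoint_range_degreeLT_of_degree_map {u : R} (hu : IsUnit u)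
    (hdeg : ∀ p, (L p).degree = d + p.degree)
    (hlead : ∀ p, (L p).leadingCoeff = u * p.leadingCoeff) :
    Codisjoint (LinearMap.range L) (degreeLT R d) := by
  rw [codisjoint_iff, Submodule.eq_top_iff']
  intro f
  induction f using degree_lt_wf.induction with
  | _ f ih =>
    by_cases hf : f.degree < d
    · exact Submodule.mem_sup_right (mem_degreeLT.2 hf)
    · have hf0 : f ≠ 0 := by
        rintro rfl
        simp at hf
      have hfd : d ≤ f.natDegree := le_natDegree_of_coe_le_degree (not_lt.1 hf)
      obtain ⟨p, hp⟩ := exists_degree_sub_map_lt hu hdeg hlead hf0 hfd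
      rw [← sub_add_cancel f (L p)]
      exact add_mem (ih _ hp) (Submodule.mem_sup_left (LinearMap.mem_range_self L p))

end DegreeRaising

theorem finrank_quotient_of_isCompl_degreeLT {R : Type*} [Ring R] [StrongRankCondition R]
    {N : Submodule R R[X]} {d : ℕ} (h : IsCompl N (degreeLT R d)) :
    Module.finrank R (R[X] ⧸ N) = d := by
  rw [(Submodule.quotientEquivOfIsCompl N _ h).finrank_eq, (degreeLTEquiv R d).finrank_eq,
    Module.finrank_fin_fun]

theorem degreeLT_four (R : Type*) [Semiring R] :
    degreeLT R 4 = Submodule.span R {1, X, X ^ 2, X ^ 3} := by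
  classical
  rw [degreeLT_eq_span_X_pow]
  congr 1
  ext p
  simp [Finset.range_add_one, or_assoc, or_comm]

section TwistedDerivative

variable {R : Type*} [CommSemiring R] {q : R[X]}

/-- The twisted differential `p ↦ p' + q p`. When `q = f'` this is `d + df ∧` on `0`-forms of the
affine line with potential `f`, with `p dx` identified with `p`. -/
noncomputable def twistedDerivative (q : R[X]) : R[X] →ₗ[R] R[X] :=
  derivative + LinearMap.mulLeft R q

theorem twistedDerivative_apply (q p : R[X]) :
    twistedDerivative q p = derivative p + q * p :=
  rfl

theorem leadingCoeff_mul_leadingCoeff_ne_zero (hq : q.leadingCoeff ∈ R⁰) {p : R[X]}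
    (hp : p ≠ 0) : q.leadingCoeff * p.leadingCoeff ≠ 0 := by
  rwa [Ne, mul_left_mem_nonZeroDivisors_eq_zero_iff hq, leadingCoeff_eq_zero]

theorem degree_derivative_lt_degree_mul (hq : q.leadingCoeff ∈ R⁰) {p : R[X]} (hp : p ≠ 0) :
    (derivative p).degree < (q * p).degree := by
  have hqp := leadingCoeff_mul_leadingCoeff_ne_zero hq hp
  have hq0 : q ≠ 0 := leadingCoeff_ne_zero.1 (left_ne_zero_of_mul hqp)
  calc (derivative p).degree < p.degree := degree_derivative_lt hp
    _ ≤ q.degree + p.degree := le_add_of_nonneg_left (zero_le_degree_iff.2 hq0)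
    _ = (q * p).degree := (degree_mul' hqp).symm

theorem degree_twistedDerivative (hq : q.leadingCoeff ∈ R⁰) (p : R[X]) :
    (twistedDerivative q p).degree = q.natDegree + p.degree := by
  obtain rfl | hp := eq_or_ne p 0
  · simp
  · have hqp := leadingCoeff_mul_leadingCoeff_ne_zero hq hp
    have hq0 : q ≠ 0 := leadingCoeff_ne_zero.1 (left_ne_zero_of_mul hqp)
    rw [twistedDerivative_apply,
      degree_add_eq_right_of_degree_lt (degree_derivative_lt_degree_mul hq hp),
      degree_mul' hqp, degree_eq_natDegree hq0]

theorem leadingCoeff_twistedDerivative (hq : q.leadingCoeff ∈ R⁰) (p : R[X]) :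
    (twistedDerivative q p).leadingCoeff = q.leadingCoeff * p.leadingCoeff := by
  obtain rfl | hp := eq_or_ne p 0
  · simp
  · rw [twistedDerivative_apply,
      leadingCoeff_add_of_degree_lt (degree_derivative_lt_degree_mul hq hp),
      leadingCoeff_mul' (leadingCoeff_mul_leadingCoeff_ne_zero hq hp)]

end TwistedDerivative

theorem isCompl_range_twistedDerivative_degreeLT {R : Type*} [CommRing R] {q : R[X]}
    (hq : IsUnit q.leadingCoeff) :
    IsCompl (LinearMap.range (twistedDerivative q)) (degreeLT R q.natDegree) := by
  have hdeg := degree_twistedDerivative hq.mem_nonZeroDivisors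
  have hlead := leadingCoeff_twistedDerivative hq.mem_nonZeroDivisors
  exact ⟨disjoint_range_degreeLT_of_degree_map hdeg,
    codisjoint_range_degreeLT_of_degree_map hq hdeg hlead⟩

theorem twisted_deRham_decomposition_general {R : Type*} [CommRing R] [Nontrivial R] {q : R[X]}
    (hq : IsUnit q.leadingCoeff) :
    IsCompl (LinearMap.range (twistedDerivative q)) (degreeLT R q.natDegree) ∧
    Module.finrank R (R[X] ⧸ LinearMap.range (twistedDerivative q)) = q.natDegree :=
  have hcompl := isCompl_range_twistedDerivative_degreeLT hq
  ⟨hcompl, finrank_quotient_of_isCompl_degreeLT hcompl⟩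

theorem Ltw_eq_twistedDerivative : Ltw = twistedDerivative (5 * X ^ 4) :=
  rfl

theorem natDegree_five_mul_X_pow_four : (5 * X ^ 4 : ℂ[X]).natDegree = 4 := by
  compute_degree!

theorem isUnit_leadingCoeff_five_mul_X_pow_four : IsUnit (5 * X ^ 4 : ℂ[X]).leadingCoeff := by
  simp

/-- `ℂ[x]` decomposes as the direct sum of the range of `L` and the span of
`{1, x, x², x³}`, and the quotient `ℂ[x]/L(ℂ[x])` is 4-dimensional. -/
theorem twisted_deRham_decomposition :
    IsCompl (LinearMap.range Ltw)
      (Submodule.span ℂ ({1, X, X ^ 2, X ^ 3} : Set (Polynomial ℂ))) ∧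
    Module.finrank ℂ (Polynomial ℂ ⧸ LinearMap.range Ltw) = 4 := by
  have h := twisted_deRham_decomposition_general isUnit_leadingCoeff_five_mul_X_pow_four
  rwa [natDegree_five_mul_X_pow_four, degreeLT_four, ← Ltw_eq_twistedDerivative] at h
end

section
/- For i = 1,...,5 let Dᵢ : ℂ[x₁,...,x₅] → ℂ[x₁,...,x₅] be the linear operator Dᵢ(p) = ∂p/∂xᵢ + 5xᵢ⁴·p, and let V = D₁(ℂ[x]) + ⋯ + D₅(ℂ[x]). For all n ∈ ℕ⁵ and ν ∈ {0,1,2,3,4}⁵, the polynomial ∏ᵢ xᵢ^{5nᵢ+νᵢ} − (−1)^{n₁+⋯+n₅} · ∏ᵢ ((νᵢ+1)/5)_{nᵢ} · ∏ᵢ xᵢ^{νᵢ} lies in V; moreover, if some νᵢ = 4 then ∏ᵢ xᵢ^{5nᵢ+νᵢ} itself lies in V. -/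
/-!
Write `Dᵢ` for the twisted partial derivatives of `W = ∑ xᵢᵈ`. From
`Dᵢ(xᵢᵏ) = k xᵢᵏ⁻¹ + d xᵢᵏ⁺ᵈ⁻¹` one gets `xᵢᵈ⁻¹ ≡ 0` for `k = 0` and
`xᵢᵃ⁺ᵈ ≡ -((a+1)/d) xᵢᵃ` for `k = a + 1`, both modulo the range of `Dᵢ`; iterating the second
relation produces the Pochhammer symbol in one variable. The range of `Dᵢ` is not an ideal, but `Dᵢ`
commutes with multiplication by polynomials annihilated by `∂/∂xᵢ`, in particular by those in the
other variables, so the congruences of the separate variables can be multiplied.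
-/

open MvPolynomial

/-- The components `Dᵢ(p) = ∂p/∂xᵢ + 5xᵢ⁴·p` of the twisted differential `D₊ = d + dW₀∧`
for the Fermat quintic `W₀ = x₁⁵+⋯+x₅⁵`. -/
noncomputable def Dtw (i : Fin 5) : MvPolynomial (Fin 5) ℂ →ₗ[ℂ] MvPolynomial (Fin 5) ℂ :=
  (pderiv i).toLinearMap + LinearMap.mulLeft ℂ (5 * X i ^ 4)

/-- The subspace `V = D₁(ℂ[x]) + ⋯ + D₅(ℂ[x])` of twisted-exact polynomials. -/
noncomputable def Vtw : Submodule ℂ (MvPolynomial (Fin 5) ℂ) :=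
  ⨆ i : Fin 5, LinearMap.range (Dtw i)

section Derivation

variable {ι R A M : Type*} [CommSemiring R] [CommSemiring A] [AddCommMonoid M] [Algebra R A]
  [Module A M] [Module R M]

theorem derivation_prod_eq_zero (D : Derivation R A M) {s : Finset ι} {f : ι → A}
    (hf : ∀ i ∈ s, D (f i) = 0) : D (∏ i ∈ s, f i) = 0 :=
  Finset.prod_induction f (D · = 0) (fun a b ha hb => by simp [ha, hb]) D.map_one_eq_zero hf

end Derivation

section Pochhammer

variable {S : Type*} [CommSemiring S]

theorem ascPochhammer_eval_eq_prod_range (n : ℕ) (x : S) :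
    (ascPochhammer S n).eval x = ∏ j ∈ Finset.range n, (x + j) := by
  induction n with
  | zero => simp
  | succ n ih => rw [ascPochhammer_succ_eval, ih, Finset.prod_range_succ]

end Pochhammer

section TwistedExact

variable {σ R : Type*} [CommRing R]

/-- The component `p ↦ ∂p/∂xᵢ + (∂W/∂xᵢ)·p` of the twisted differential `d + dW∧` of a potential
`W`, acting on the coefficients of top-degree forms. -/
noncomputable def twistedPDeriv (W : MvPolynomial σ R) (i : σ) :
    MvPolynomial σ R →ₗ[R] MvPolynomial σ R :=
  (pderiv i).toLinearMap + LinearMap.mulLeft R (pderiv i W)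

/-- The coefficients of the exact top-degree forms of the twisted differential `d + dW∧`. -/
noncomputable def twistedExact (W : MvPolynomial σ R) : Submodule R (MvPolynomial σ R) :=
  ⨆ i, LinearMap.range (twistedPDeriv W i)

variable {W : MvPolynomial σ R} {i : σ} {p p' q : MvPolynomial σ R}

theorem twistedPDeriv_apply (W : MvPolynomial σ R) (i : σ) (p : MvPolynomial σ R) :
    twistedPDeriv W i p = pderiv i p + pderiv i W * p := rfl

theorem twistedPDeriv_mul_of_pderiv_eq_zero (hq : pderiv i q = 0) :
    twistedPDeriv W i (p * q) = twistedPDeriv W i p * q := by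
  simp only [twistedPDeriv_apply, pderiv_mul, hq]
  ring

theorem mul_mem_twistedExact (hp : p ∈ LinearMap.range (twistedPDeriv W i))
    (hq : pderiv i q = 0) : p * q ∈ twistedExact W := by
  obtain ⟨u, rfl⟩ := hp
  exact Submodule.mem_iSup_of_mem i ⟨u * q, twistedPDeriv_mul_of_pderiv_eq_zero hq⟩

theorem mul_smodEq_mul_twistedExact
    (hp : p ≡ p' [SMOD LinearMap.range (twistedPDeriv W i)]) (hq : pderiv i q = 0) :
    p * q ≡ p' * q [SMOD twistedExact W] := by
  rw [SModEq.sub_mem] at hp ⊢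
  rw [← sub_mul]
  exact mul_mem_twistedExact hp hq

theorem prod_mem_twistedExact {f : σ → MvPolynomial σ R} {s : Finset σ} (hi : i ∈ s)
    (hfi : f i ∈ LinearMap.range (twistedPDeriv W i))
    (hf : ∀ j ∈ s, j ≠ i → pderiv i (f j) = 0) : ∏ j ∈ s, f j ∈ twistedExact W := by
  classical
  rw [← Finset.mul_prod_erase s f hi]
  exact mul_mem_twistedExact hfi <| derivation_prod_eq_zero _ fun j hj =>
    hf j (Finset.mem_of_mem_erase hj) (Finset.ne_of_mem_erase hj)

theorem prod_mul_smodEq_prod_mul_twistedExact {f g : σ → MvPolynomial σ R} {s : Finset σ}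
    (hfg : ∀ i ∈ s, f i ≡ g i [SMOD LinearMap.range (twistedPDeriv W i)])
    (hf : ∀ i ∈ s, ∀ j ∈ s, j ≠ i → pderiv i (f j) = 0)
    (hg : ∀ i ∈ s, ∀ j ∈ s, j ≠ i → pderiv i (g j) = 0)
    (hq : ∀ i ∈ s, pderiv i q = 0) :
    (∏ i ∈ s, f i) * q ≡ (∏ i ∈ s, g i) * q [SMOD twistedExact W] := by
  induction s using Finset.cons_induction generalizing q with
  | empty => rfl
  | cons a s ha ih =>
    simp only [Finset.forall_mem_cons] at hfg hf hg hq
    have hne : ∀ i ∈ s, a ≠ i := fun i hi h => ha (h ▸ hi)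
    have hfq : ∀ i ∈ s, pderiv i (f a * q) = 0 := fun i hi => by
      simp [(hf.2 i hi).1 (hne i hi), hq.2 i hi]
    have hgq : pderiv a ((∏ i ∈ s, g i) * q) = 0 := by
      have hgs : pderiv a (∏ i ∈ s, g i) = 0 :=
        derivation_prod_eq_zero _ fun i hi => hg.1.2 i hi (hne i hi).symm
      simp [hgs, hq.1]
    calc (∏ i ∈ s.cons a ha, f i) * q
        = (∏ i ∈ s, f i) * (f a * q) := by rw [Finset.prod_cons]; ring
      _ ≡ (∏ i ∈ s, g i) * (f a * q) [SMOD twistedExact W] :=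
          ih hfg.2 (fun i hi => (hf.2 i hi).2) (fun i hi => (hg.2 i hi).2) hfq
      _ = f a * ((∏ i ∈ s, g i) * q) := by ring
      _ ≡ g a * ((∏ i ∈ s, g i) * q) [SMOD twistedExact W] :=
          mul_smodEq_mul_twistedExact hfg.1 hgq
      _ = (∏ i ∈ s.cons a ha, g i) * q := by rw [Finset.prod_cons]; ring

theorem pderiv_X_pow_of_ne {j : σ} (h : j ≠ i) (m : ℕ) :
    pderiv i (X j ^ m : MvPolynomial σ R) = 0 := by
  rw [pderiv_pow, pderiv_X_of_ne h, mul_zero]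

theorem pderiv_psum [Fintype σ] (i : σ) (d : ℕ) :
    pderiv i (psum σ R d) = (d : MvPolynomial σ R) * X i ^ (d - 1) := by
  rw [psum, map_sum, Fintype.sum_eq_single i fun j hj => pderiv_X_pow_of_ne hj d, pderiv_pow,
    pderiv_X_self, mul_one]

end TwistedExact

section Fermat

variable {σ K : Type*} [Fintype σ] [Field K] {d : ℕ}

theorem X_pow_pred_mem_range_twistedPDeriv (hd : (d : K) ≠ 0) (i : σ) :
    X i ^ (d - 1) ∈ LinearMap.range (twistedPDeriv (psum σ K d) i) := by
  have h : twistedPDeriv (psum σ K d) i 1 = (d : K) • X i ^ (d - 1) := by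
    rw [twistedPDeriv_apply, pderiv_one, pderiv_psum, smul_eq_C_mul, map_natCast]
    ring
  rw [← Submodule.smul_mem_iff _ hd, ← h]
  exact LinearMap.mem_range_self _ 1

theorem X_pow_add_smodEq (hd : (d : K) ≠ 0) (i : σ) (a : ℕ) :
    X i ^ (a + d) ≡ (-((a + 1 : K) / d)) • X i ^ a
      [SMOD LinearMap.range (twistedPDeriv (psum σ K d) i)] := by
  have hd' : 1 ≤ d := Nat.one_le_iff_ne_zero.mpr fun h => hd (by simp [h])
  have h : twistedPDeriv (psum σ K d) i (X i ^ (a + 1)) =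
      (d : K) • (X i ^ (a + d) - (-((a + 1 : K) / d)) • X i ^ a) := by
    have hpow : (X i ^ (a + d) : MvPolynomial σ K) = X i ^ (d - 1) * X i ^ (a + 1) := by
      rw [← pow_add]
      congr 1
      lia
    rw [smul_sub, smul_smul, mul_neg, mul_div_cancel₀ _ hd, twistedPDeriv_apply, pderiv_psum,
      pderiv_pow, pderiv_X_self, hpow]
    simp only [smul_eq_C_mul, map_neg, map_add, map_one, map_natCast, Nat.add_sub_cancel]
    push_cast
    ring
  rw [SModEq.sub_mem, ← Submodule.smul_mem_iff _ hd, ← h]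
  exact LinearMap.mem_range_self _ _

theorem X_pow_mul_add_smodEq (hd : (d : K) ≠ 0) (i : σ) (n v : ℕ) :
    X i ^ (d * n + v) ≡ ((-1) ^ n * (ascPochhammer K n).eval ((v + 1 : K) / d)) • X i ^ v
      [SMOD LinearMap.range (twistedPDeriv (psum σ K d) i)] := by
  induction n with
  | zero => simp
  | succ n ih =>
    calc X i ^ (d * (n + 1) + v)
        = X i ^ (d * n + v + d) := by ring
      _ ≡ (-(((d * n + v : ℕ) + 1 : K) / d)) • X i ^ (d * n + v) [SMOD _] :=
          X_pow_add_smodEq hd i _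
      _ ≡ _ [SMOD _] := ih.smul _
      _ = ((-1) ^ (n + 1) * (ascPochhammer K (n + 1)).eval ((v + 1 : K) / d)) • X i ^ v := by
          rw [smul_smul, ascPochhammer_succ_eval]
          congr 1
          push_cast
          field_simp
          ring

theorem X_pow_mem_range_twistedPDeriv (hd : (d : K) ≠ 0) (i : σ) {m : ℕ} (hm : d ∣ m + 1) :
    X i ^ m ∈ LinearMap.range (twistedPDeriv (psum σ K d) i) := by
  obtain ⟨n, rfl⟩ : ∃ n, m = d * n + (d - 1) := by
    obtain ⟨_ | n, hn⟩ := hm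
    · simp at hn
    · have hd' : d ≠ 0 := fun h => hd (by simp [h])
      exact ⟨n, by rw [mul_add_one] at hn; lia⟩
  rw [← SModEq.zero]
  exact (X_pow_mul_add_smodEq hd i n (d - 1)).trans <|
    SModEq.zero.mpr <| Submodule.smul_mem _ _ <| X_pow_pred_mem_range_twistedPDeriv hd i

theorem prod_X_pow_smodEq (hd : (d : K) ≠ 0) (n ν : σ → ℕ) :
    ∏ i, X i ^ (d * n i + ν i) ≡
      C ((-1) ^ (∑ i, n i) * ∏ i, (ascPochhammer K (n i)).eval ((ν i + 1 : K) / d)) *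
        ∏ i, X i ^ ν i [SMOD twistedExact (psum σ K d)] := by
  have h := prod_mul_smodEq_prod_mul_twistedExact (q := 1) (s := Finset.univ)
    (fun i _ => X_pow_mul_add_smodEq hd i (n i) (ν i))
    (fun _ _ _ _ hji => pderiv_X_pow_of_ne hji _)
    (fun _ _ _ _ hji => by rw [Derivation.map_smul, pderiv_X_pow_of_ne hji, smul_zero])
    (fun _ _ => pderiv_one)
  simpa only [mul_one, smul_eq_C_mul, Finset.prod_mul_distrib, ← map_prod,
    Finset.prod_pow_eq_pow_sum] using h

theorem multivariable_pochhammer_reduction_general (hd : (d : K) ≠ 0) (n ν : σ → ℕ) :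
    ((∏ i, X i ^ (d * n i + ν i)) -
      C ((-1) ^ (∑ i, n i) * ∏ i, (ascPochhammer K (n i)).eval ((ν i + 1 : K) / d)) *
        ∏ i, X i ^ ν i ∈ twistedExact (psum σ K d)) ∧
    ((∃ i, d ∣ ν i + 1) → (∏ i, X i ^ (d * n i + ν i)) ∈ twistedExact (psum σ K d)) := by
  refine ⟨SModEq.sub_mem.mp (prod_X_pow_smodEq hd n ν), ?_⟩
  rintro ⟨i, hi⟩
  have hdvd : d ∣ d * n i + ν i + 1 := (dvd_mul_right d (n i)).add hi
  exact prod_mem_twistedExact (Finset.mem_univ i) (X_pow_mem_range_twistedPDeriv hd i hdvd)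
    fun j _ hji => pderiv_X_pow_of_ne hji _

end Fermat

theorem twistedExact_psum_fin_five : twistedExact (psum (Fin 5) ℂ 5) = Vtw := by
  simp only [twistedExact, Vtw, twistedPDeriv, Dtw, pderiv_psum, Nat.cast_ofNat, Nat.reduceSub]

/-- For all `n ∈ ℕ⁵` and `ν ∈ {0,…,4}⁵`, the polynomial
`∏ᵢ xᵢ^{5nᵢ+νᵢ} − (−1)^{∑nᵢ} ∏ᵢ ((νᵢ+1)/5)_{nᵢ} ∏ᵢ xᵢ^{νᵢ}` lies in `V`;
moreover if some `νᵢ = 4` then `∏ᵢ xᵢ^{5nᵢ+νᵢ}` itself lies in `V`. -/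
theorem multivariable_pochhammer_reduction (n ν : Fin 5 → ℕ) (hν : ∀ i, ν i ≤ 4) :
    ((∏ i, X i ^ (5 * n i + ν i)) -
      C ((-1 : ℂ) ^ (∑ i, n i) *
          ∏ i, ∏ j ∈ Finset.range (n i), (((ν i : ℂ) + 1) / 5 + (j : ℂ))) *
        ∏ i, X i ^ ν i ∈ Vtw) ∧
    ((∃ i, ν i = 4) → (∏ i, X i ^ (5 * n i + ν i)) ∈ Vtw) := by
  obtain ⟨hred, hmem⟩ := multivariable_pochhammer_reduction_general (d := 5) (K := ℂ) (by simp) n ν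
  simp only [twistedExact_psum_fin_five, ascPochhammer_eval_eq_prod_range] at hred hmem
  exact ⟨hred, fun ⟨i, hi⟩ => hmem ⟨i, by simp [hi]⟩⟩
end

section
/- Let a, b ∈ ℝ with sin(π(a+b)) ≠ 0, and define B ∈ M₂(ℂ) by B = (1/(i·sin(π(a+b)))) · [[cos(π(a−b)) − e^{iπ(a+b)}, 2 sin(πa) sin(πb)], [2 e^{2πi(a+b)} sin(πa) sin(πb), e^{iπ(a+b)}(e^{2πia} + e^{2πib} − 2)/2]]. Then B preserves the signature-(1,1) Hermitian form: Bᴴ · diag(1, −1) · B = diag(1, −1), where Bᴴ is the conjugate transpose. -/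
/-!
Put `u = exp(iπ(a+b))` and let `t = 2 sin(πa) sin(πb) / sin(π(a+b))`, which is real. Since
`cos(π(a-b)) = cos(π(a+b)) + 2 sin(πa) sin(πb)` and `(e^{2πia} + e^{2πib}) / 2 = u cos(π(a-b))`,
the monodromy matrix factors as `B = diag(-1, u²) * [[1 + it, it], [-it, 1 - it]]`. The first
factor is diagonal with unimodular entries and the second is a parabolic element of `SU(1,1)`,
so both preserve `diag(1, -1)`.
-/

open Complex Real Matrix

/-- The monodromy matrix `B` around `z = ∞` acting on the hypergeometric solutions
`F₁, F₂`. -/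
noncomputable def Bmon (a b : ℝ) : Matrix (Fin 2) (Fin 2) ℂ :=
  (1 / (Complex.I * (Real.sin (π * (a + b)) : ℂ))) •
    !![(Real.cos (π * (a - b)) : ℂ) - Complex.exp (Complex.I * π * (a + b)),
        2 * (Real.sin (π * a) : ℂ) * (Real.sin (π * b) : ℂ);
      2 * Complex.exp (2 * π * Complex.I * (a + b)) *
          (Real.sin (π * a) : ℂ) * (Real.sin (π * b) : ℂ),
        Complex.exp (π * Complex.I * (a + b)) *
          (Complex.exp (2 * π * Complex.I * a) + Complex.exp (2 * π * Complex.I * b) - 2) / 2]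

section PseudoUnitary

/-- The elements of a star monoid preserving the sesquilinear form given by `j`. For matrices
these are the `A` with `Aᴴ * j * A = j`; no invertibility is imposed, since `j` may be
degenerate. -/
def pseudoUnitary {M : Type*} [Monoid M] [StarMul M] (j : M) : Submonoid M where
  carrier := {x | star x * j * x = j}
  one_mem' := by simp
  mul_mem' {x y} hx hy := by
    calc star (x * y) * j * (x * y)
        = star y * (star x * j * x) * y := by simp only [star_mul, mul_assoc]
      _ = star y * j * y := by rw [hx]
      _ = j := hy

lemma diagonal_mem_pseudoUnitary_diagonal {n R : Type*} [Fintype n] [DecidableEq n]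
    [CommSemiring R] [StarRing R] (d : n → R) {v : n → R} (hv : ∀ i, v i ∈ unitary R) :
    diagonal v ∈ pseudoUnitary (diagonal d) := by
  change (diagonal v)ᴴ * diagonal d * diagonal v = diagonal d
  rw [diagonal_conjTranspose, diagonal_mul_diagonal, diagonal_mul_diagonal]
  congr 1
  funext i
  rw [mul_right_comm, Pi.star_apply, Unitary.star_mul_self_of_mem (hv i), one_mul]

/-- The matrix `1 + β N` with `N = [[1, 1], [-1, -1]]`. As `N² = 0`, it is unipotent; for
nonzero imaginary `β` it is a parabolic element of `SU(1,1)`. -/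
def parabolic {R : Type*} [Ring R] (β : R) : Matrix (Fin 2) (Fin 2) R :=
  !![1 + β, β; -β, 1 - β]

lemma parabolic_mem_pseudoUnitary {R : Type*} [Ring R] [StarRing R] {β : R}
    (hβ : β ∈ skewAdjoint R) :
    parabolic β ∈ pseudoUnitary !![(1 : R), 0; 0, -1] := by
  have star_β : star β = -β := skewAdjoint.mem_iff.mp hβ
  change (parabolic β)ᴴ * !![(1 : R), 0; 0, -1] * parabolic β = !![(1 : R), 0; 0, -1]
  have conjTranspose_parabolic : (parabolic β)ᴴ = !![1 - β, β; -β, 1 + β] := by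
    ext i j
    fin_cases i <;> fin_cases j <;> simp [parabolic, star_β, sub_eq_add_neg]
  rw [conjTranspose_parabolic, parabolic, mul_fin_two, mul_fin_two]
  ext i j
  fin_cases i <;> fin_cases j <;>
    simp only [Fin.zero_eta, Fin.mk_one, of_apply, cons_val_zero, cons_val_one] <;>
    noncomm_ring

end PseudoUnitary

section Trigonometry

lemma exp_ofReal_mul_I_mem_unitary (θ : ℝ) : Complex.exp (θ * I) ∈ unitary ℂ := by
  rw [Unitary.mem_iff_star_mul_self, Complex.star_def, ← Complex.exp_conj, ← Complex.exp_add]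
  simp

lemma cos_sub_sub_exp_add_mul_I (x y : ℂ) :
    Complex.cos (x - y) - Complex.exp ((x + y) * I) =
      2 * Complex.sin x * Complex.sin y - Complex.sin (x + y) * I := by
  rw [Complex.exp_mul_I, Complex.cos_sub, Complex.cos_add]
  ring

lemma exp_two_mul_I_add_exp_two_mul_I (x y : ℂ) :
    Complex.exp (2 * x * I) + Complex.exp (2 * y * I) =
      2 * Complex.exp ((x + y) * I) * Complex.cos (x - y) := by
  rw [mul_right_comm 2 (Complex.exp _), Complex.two_cos, add_mul, ← Complex.exp_add,
    ← Complex.exp_add]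
  ring_nf

lemma exp_add_mul_I_mul_exp_two_mul_I_add_sub_two (x y : ℂ) :
    Complex.exp ((x + y) * I) *
        (Complex.exp (2 * x * I) + Complex.exp (2 * y * I) - 2) / 2 =
      Complex.exp (2 * (x + y) * I) *
        (2 * Complex.sin x * Complex.sin y + Complex.sin (x + y) * I) := by
  have cos_sub_inv : Complex.cos (x - y) - (Complex.exp ((x + y) * I))⁻¹ =
      2 * Complex.sin x * Complex.sin y + Complex.sin (x + y) * I := by
    have reflected := cos_sub_sub_exp_add_mul_I (-x) (-y)
    rw [← neg_sub', Complex.cos_neg, ← neg_add, neg_mul, Complex.exp_neg] at reflected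
    simpa only [Complex.sin_neg, mul_neg, neg_mul, neg_neg, sub_neg_eq_add] using reflected
  have exp_sq : Complex.exp (2 * (x + y) * I) = Complex.exp ((x + y) * I) ^ 2 := by
    rw [mul_assoc, ← Nat.cast_ofNat, Complex.exp_nat_mul]
  have exp_ne_zero := Complex.exp_ne_zero ((x + y) * I)
  rw [exp_two_mul_I_add_exp_two_mul_I, ← cos_sub_inv, exp_sq]
  field_simp

end Trigonometry

lemma smul_eq_diagonal_mul_parabolic (k w : ℂ) {s : ℂ} (hs : s ≠ 0) :
    (1 / (I * s)) • !![k - s * I, k; w * k, w * (k + s * I)] =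
      diagonal ![-1, w] * parabolic (k / s * I) := by
  have inv_I_mul : 1 / (I * s) = -(I / s) := by
    field_simp
    rw [I_sq, neg_neg]
  rw [inv_I_mul, parabolic, diagonal_vec2, mul_fin_two, smul_of]
  ext i j
  fin_cases i <;> fin_cases j <;>
    simp only [Fin.zero_eta, Fin.mk_one, of_apply, Pi.smul_apply, cons_val_zero, cons_val_one,
      smul_eq_mul] <;>
    grind [I_sq]

/-- The real parameter `t` of the parabolic factor of `Bmon a b`; it has the junk value `0` when
`sin(π(a+b)) = 0`. -/
noncomputable def monodromyShear (a b : ℝ) : ℝ :=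
  2 * Real.sin (π * a) * Real.sin (π * b) / Real.sin (π * (a + b))

lemma Bmon_eq_diagonal_mul_parabolic (a b : ℝ) (h : Real.sin (π * (a + b)) ≠ 0) :
    Bmon a b =
      diagonal ![-1, Complex.exp ((2 * (π * (a + b)) : ℝ) * I)] *
        parabolic (monodromyShear a b * I) := by
  have upper_left : (Real.cos (π * (a - b)) : ℂ) - Complex.exp (I * π * (a + b)) =
      2 * (Real.sin (π * a) : ℂ) * (Real.sin (π * b) : ℂ) - (Real.sin (π * (a + b)) : ℂ) * I := by
    push_cast
    convert cos_sub_sub_exp_add_mul_I (π * a) (π * b) using 3 <;> ring_nf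
  have lower_left : 2 * Complex.exp (2 * π * I * (a + b)) *
        (Real.sin (π * a) : ℂ) * (Real.sin (π * b) : ℂ) =
      Complex.exp ((2 * (π * (a + b)) : ℝ) * I) *
        (2 * (Real.sin (π * a) : ℂ) * (Real.sin (π * b) : ℂ)) := by
    push_cast
    ring_nf
  have lower_right : Complex.exp (π * I * (a + b)) *
        (Complex.exp (2 * π * I * a) + Complex.exp (2 * π * I * b) - 2) / 2 =
      Complex.exp ((2 * (π * (a + b)) : ℝ) * I) *
        (2 * (Real.sin (π * a) : ℂ) * (Real.sin (π * b) : ℂ)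
          + (Real.sin (π * (a + b)) : ℂ) * I) := by
    push_cast
    convert exp_add_mul_I_mul_exp_two_mul_I_add_sub_two (π * a) (π * b) using 3 <;> ring_nf
  have shear_cast : (monodromyShear a b : ℂ) =
      2 * (Real.sin (π * a) : ℂ) * (Real.sin (π * b) : ℂ) / (Real.sin (π * (a + b)) : ℂ) := by
    simp only [monodromyShear, Complex.ofReal_div, Complex.ofReal_mul, Complex.ofReal_ofNat]
  rw [Bmon, upper_left, lower_left, lower_right, shear_cast]
  exact smul_eq_diagonal_mul_parabolic _ _ (Complex.ofReal_ne_zero.mpr h)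

/-- The hypergeometric monodromy matrix `B` preserves the signature-`(1,1)` Hermitian
form: `Bᴴ · diag(1,−1) · B = diag(1,−1)`. -/
theorem monodromy_preserves_signature_form (a b : ℝ) (h : Real.sin (π * (a + b)) ≠ 0) :
    (Bmon a b)ᴴ * !![(1 : ℂ), 0; 0, -1] * Bmon a b = !![(1 : ℂ), 0; 0, -1] := by
  have unimodular : ∀ i, ![-1, Complex.exp ((2 * (π * (a + b)) : ℝ) * I)] i ∈ unitary ℂ := by
    rw [Fin.forall_fin_two]
    exact ⟨by simp [Unitary.mem_iff], exp_ofReal_mul_I_mem_unitary _⟩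
  have diagonal_mem := diagonal_mem_pseudoUnitary_diagonal ![1, -1] unimodular
  rw [diagonal_vec2 1 (-1)] at diagonal_mem
  have shear_skew : (monodromyShear a b * I : ℂ) ∈ skewAdjoint ℂ := by
    simp [skewAdjoint.mem_iff]
  rw [Bmon_eq_diagonal_mul_parabolic a b h]
  exact mul_mem diagonal_mem (parabolic_mem_pseudoUnitary shear_skew)
end
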